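/- Let ψ(w) = w − ⌊w⌋ − 1/2. For any positive integer H and real w, with α_{h,H} = (1/(πh))·ρ(h/(H+1)) where ρ(ξ) = πξ(1−ξ)cot(πξ) + ξ, and β_{h,H} = (1/(H+1))(1 − h/(H+1)), one has the pointwise bound −ψ(w) ≥ ∑_{h=1}^{H} α_{h,H} sin(2πhw) − ∑_{h=1}^{H} β_{h,H} cos(2πhw) − 1/(2H+2). -/

import Mathlib

open Real

/-- Vaaler's function `ρ(ξ) = πξ(1-ξ)cot(πξ) + ξ`. -/
noncomputable def vaalerRho (ξ : ℝ) : ℝ :=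
  π * ξ * (1 - ξ) * (Real.cos (π * ξ) / Real.sin (π * ξ)) + ξ

/-!
The function `x cot x` is concave on `(-π, π)`, so it lies below its tangent lines. Applied between
consecutive points of the progression `u_k - π`, where `u_k = y + k π / N`, the tangent inequalities
telescope to `N cot y ≤ ∑_{k < N} (cot u_k - (u_k - π) / sin² u_k)` for `0 < y < π`. Multiplying by
`sin² (N y)`, which takes the same value at all the `u_k`, turns cotangents into conjugate Dirichlet
kernels `D` and inverse squared sines into Fejér kernels `F`:
`N D(y) + ∑_{k < N} (u_k - π) F(u_k) ≤ 0`. The points with `sin (N y) = 0` are recovered by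
continuity. With `N = H + 1` and `y = π w`, Vaaler's polynomial is
`D(y) / (π N) + ∑_{k < N} k F(u_k) / N³ - 1 / 2`, while `∑_{k < N} F(u_k) = N²`, so for
`0 ≤ w ≤ 1` this inequality is exactly the asserted bound; periodicity does the rest.
-/

lemma mul_sinc (x : ℝ) : x * sinc x = sin x := by
  rcases eq_or_ne x 0 with rfl | hx
  · simp
  · rw [sinc_of_ne_zero hx, mul_div_cancel₀ _ hx]

lemma sinc_antitoneOn : AntitoneOn sinc (Set.Icc 0 π) := by
  intro x hx y hy hxy
  rcases hx.1.eq_or_lt with rfl | hx0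
  · simpa using sinc_le_one y
  have hslope : ∀ z : ℝ, 0 < z → slope sin 0 z = sinc z := fun z hz ↦ by
    simp [slope_def_field, sinc_of_ne_zero hz.ne']
  have hy0 : 0 < y := hx0.trans_le hxy
  rw [← hslope x hx0, ← hslope y hy0]
  exact strictConcaveOn_sin_Icc.concaveOn.antitoneOn_slope_gt ⟨le_rfl, pi_pos.le⟩
    ⟨hx, hx0⟩ ⟨hy, hy0⟩ hxy

lemma cos_le_sinc {x : ℝ} (hx : x ∈ Set.Icc 0 π) : cos x ≤ sinc x := by
  rcases hx.1.eq_or_lt with rfl | hx0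
  · simp
  simpa [slope_def_field, sinc_of_ne_zero hx0.ne'] using
    strictConcaveOn_sin_Icc.concaveOn.le_slope_of_hasDerivAt ⟨le_rfl, pi_pos.le⟩ hx hx0
      (hasDerivAt_sin x)

lemma sinc_nonneg {x : ℝ} (hx : x ∈ Set.Icc 0 π) : 0 ≤ sinc x := by
  simpa [sinc_of_ne_zero pi_ne_zero] using sinc_antitoneOn hx ⟨pi_pos.le, le_rfl⟩ hx.2

lemma sinc_pos {x : ℝ} (h₁ : -π < x) (h₂ : x < π) : 0 < sinc x := by
  rcases lt_trichotomy x 0 with hx | rfl | hx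
  · rw [sinc_of_ne_zero hx.ne]
    exact div_pos_of_neg_of_neg (sin_neg_of_neg_of_neg_pi_lt hx h₁) hx
  · simp
  · rw [sinc_of_ne_zero hx.ne']
    exact div_pos (sin_pos_of_pos_of_lt_pi hx h₂) hx

lemma sinc_add_le_mul {x y : ℝ} (hx : 0 ≤ x) (hy : 0 ≤ y) (hxy : x + y ≤ π) :
    sinc (x + y) ≤ sinc x * sinc y := by
  have hxI : x ∈ Set.Icc 0 π := ⟨hx, by linarith⟩
  have hyI : y ∈ Set.Icc 0 π := ⟨hy, by linarith⟩
  rcases (add_nonneg hx hy).eq_or_lt with h0 | hpos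
  · obtain ⟨rfl, rfl⟩ : x = 0 ∧ y = 0 := ⟨by linarith, by linarith⟩
    simp
  refine le_of_mul_le_mul_left ?_ hpos
  calc (x + y) * sinc (x + y)
      = x * sinc x * cos y + y * sinc y * cos x := by
        rw [mul_sinc, mul_sinc, mul_sinc, sin_add]; ring
    _ ≤ x * sinc x * sinc y + y * sinc y * sinc x := by
        have := sinc_nonneg hxI
        have := sinc_nonneg hyI
        gcongr
        exacts [cos_le_sinc hyI, cos_le_sinc hxI]
    _ = (x + y) * (sinc x * sinc y) := by ring

lemma sinc_mul_le_sinc_sub {x y : ℝ} (hx : x ∈ Set.Icc 0 π) (hy : y ∈ Set.Icc 0 π) :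
    sinc x * sinc y ≤ sinc (x - y) := by
  wlog hyx : y ≤ x generalizing x y
  · simpa [mul_comm, ← sinc_neg (x - y)] using this hy hx (le_of_not_ge hyx)
  calc sinc x * sinc y ≤ sinc x := mul_le_of_le_one_right (sinc_nonneg hx) (sinc_le_one y)
    _ ≤ sinc (x - y) :=
        sinc_antitoneOn ⟨sub_nonneg.2 hyx, by linarith [hx.2, hy.1]⟩ hx (by linarith [hy.1])

lemma mul_sinc_mul_sub_sinc_add_nonneg {x t : ℝ} (hx : -π ≤ x) (ht : 0 ≤ t) (ht' : t ≤ π)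
    (hxt : x + t ≤ π) : 0 ≤ x * (sinc x * sinc t - sinc (x + t)) := by
  rcases le_total 0 x with h | h
  · exact mul_nonneg h (sub_nonneg.2 (sinc_add_le_mul h ht hxt))
  · have hle := sinc_mul_le_sinc_sub ⟨ht, ht'⟩ ⟨neg_nonneg.2 h, neg_le.1 hx⟩
    rw [sinc_neg, sub_neg_eq_add, mul_comm, add_comm] at hle
    exact mul_nonneg_of_nonpos_of_nonpos h (sub_nonpos.2 hle)

-- The coefficient of `t` is the derivative of `x cot x`.
lemma add_mul_cot_add_le {x t : ℝ} (hx : -π < x) (ht : 0 ≤ t) (ht' : t ≤ π) (hxt : x + t < π)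
    (hx0 : x ≠ 0) (hxt0 : x + t ≠ 0) :
    (x + t) * cot (x + t) ≤ x * cot x + t * (cot x - x / sin x ^ 2) := by
  have hpos : 0 < sinc x := sinc_pos hx (by linarith)
  have hpos' : 0 < sinc (x + t) := sinc_pos (by linarith) hxt
  have hsin : sin x ≠ 0 := mul_sinc x ▸ mul_ne_zero hx0 hpos.ne'
  have hsin' : sin (x + t) ≠ 0 := mul_sinc (x + t) ▸ mul_ne_zero hxt0 hpos'.ne'
  have hsub : sin t = sin (x + t) * cos x - cos (x + t) * sin x := by
    rw [← sin_sub, add_sub_cancel_left]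
  have hgap : x * cot x + t * (cot x - x / sin x ^ 2) - (x + t) * cot (x + t)
      = t * (x * (sinc x * sinc t - sinc (x + t))) / (sinc (x + t) * sin x ^ 2) :=
    calc x * cot x + t * (cot x - x / sin x ^ 2) - (x + t) * cot (x + t)
        = ((x + t) * (sin x * sin t) - x * t * sin (x + t)) / (sin (x + t) * sin x ^ 2) := by
          rw [hsub, cot_eq_cos_div_sin, cot_eq_cos_div_sin]
          field_simp
          ring
      _ = (x + t) * (t * (x * (sinc x * sinc t - sinc (x + t))))
            / ((x + t) * (sinc (x + t) * sin x ^ 2)) := by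
          rw [← mul_assoc (x + t) (sinc _), mul_sinc (x + t)]
          congr 1
          rw [← mul_sinc x, ← mul_sinc t, ← mul_sinc (x + t)]
          ring
      _ = _ := mul_div_mul_left _ _ hxt0
  have := mul_sinc_mul_sub_sinc_add_nonneg hx.le ht ht' hxt.le
  rw [← sub_nonneg, hgap]
  positivity

lemma two_mul_sin_mul_sum_sin (n : ℕ) (p θ : ℝ) :
    2 * sin θ * ∑ k ∈ Finset.range n, sin (p + 2 * k * θ)
      = cos (p - θ) - cos (p + (2 * n - 1) * θ) := by
  induction n with
  | zero => simp [sub_eq_add_neg]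
  | succ n ih =>
    rw [Finset.sum_range_succ, mul_add, ih, two_mul_sin_mul_sin, ← cos_neg (θ - _)]
    push_cast
    ring_nf

lemma two_mul_sin_mul_sum_cos (n : ℕ) (p θ : ℝ) :
    2 * sin θ * ∑ k ∈ Finset.range n, cos (p + 2 * k * θ)
      = sin (p + (2 * n - 1) * θ) - sin (p - θ) := by
  have h := two_mul_sin_mul_sum_sin n (p + π / 2) θ
  simp only [add_right_comm p (π / 2), add_sub_right_comm p (π / 2), sin_add_pi_div_two,
    cos_add_pi_div_two] at h
  linarith

lemma two_mul_sin_mul_sum_mul_cos (n : ℕ) (p θ : ℝ) :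
    2 * sin θ * ∑ k ∈ Finset.range n, (k : ℝ) * cos (p + 2 * k * θ)
      = n * sin (p + (2 * n - 1) * θ) - ∑ k ∈ Finset.range n, sin (p + θ + 2 * k * θ) := by
  induction n with
  | zero => simp
  | succ n ih =>
    have hstep : 2 * sin θ * cos (p + 2 * n * θ)
        = sin (p + θ + 2 * n * θ) - sin (p + (2 * n - 1) * θ) := by
      rw [two_mul_sin_mul_cos, ← neg_sub, sin_neg]
      ring_nf
    rw [Finset.sum_range_succ, Finset.sum_range_succ, mul_add, ih, mul_left_comm, hstep]
    push_cast
    ring_nf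

section EquallySpaced

variable {N : ℕ} {θ : ℝ} {m : ℤ}

lemma sum_sin_add_eq_zero (hsin : sin θ ≠ 0) (hθ : N * θ = m * π) (p : ℝ) :
    ∑ k ∈ Finset.range N, sin (p + 2 * k * θ) = 0 := by
  have hperiod : p + (2 * N - 1) * θ = p - θ + m * (2 * π) := by linear_combination 2 * hθ
  have hsum := two_mul_sin_mul_sum_sin N p θ
  rw [hperiod, cos_add_int_mul_two_pi, sub_self] at hsum
  exact (mul_eq_zero.1 hsum).resolve_left (mul_ne_zero two_ne_zero hsin)

lemma sum_cos_add_eq_zero (hsin : sin θ ≠ 0) (hθ : N * θ = m * π) (p : ℝ) :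
    ∑ k ∈ Finset.range N, cos (p + 2 * k * θ) = 0 := by
  simpa only [add_right_comm p (π / 2), sin_add_pi_div_two] using
    sum_sin_add_eq_zero hsin hθ (p + π / 2)

lemma sum_mul_cos_add_eq (hsin : sin θ ≠ 0) (hθ : N * θ = m * π) (p : ℝ) :
    ∑ k ∈ Finset.range N, (k : ℝ) * cos (p + 2 * k * θ)
      = N / 2 * (cot θ * sin p - cos p) := by
  have hperiod : p + (2 * N - 1) * θ = p - θ + m * (2 * π) := by linear_combination 2 * hθ
  have hsum := two_mul_sin_mul_sum_mul_cos N p θ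
  rw [sum_sin_add_eq_zero hsin hθ, hperiod, sin_add_int_mul_two_pi, sub_zero, sin_sub] at hsum
  refine mul_left_cancel₀ (mul_ne_zero two_ne_zero hsin) (hsum.trans ?_)
  rw [cot_eq_cos_div_sin]
  field_simp

end EquallySpaced

lemma sin_natCast_mul_pi_div_ne_zero {h N : ℕ} (h0 : 0 < h) (hN : h < N) :
    sin (h * (π / N)) ≠ 0 := by
  have hN0 : 0 < N := h0.trans hN
  refine (sin_pos_of_pos_of_lt_pi (by positivity) ?_).ne'
  rw [mul_div_left_comm]
  exact mul_lt_of_lt_one_right pi_pos ((div_lt_one (by positivity)).2 (by exact_mod_cast hN))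

/-- The conjugate Dirichlet kernel of degree `N - 1`, in the variable `x = πw` and hence of
period `π`; it carries the jump of the sawtooth function in Vaaler's approximation. -/
noncomputable def conjDirichletKernel (N : ℕ) (x : ℝ) : ℝ :=
  ∑ h ∈ Finset.Ico 1 N, sin (2 * h * x)

/-- The Fejér kernel `(sin (N x) / sin x) ^ 2`, in the variable `x = πw` and hence of period `π`,
without the usual factor `1 / N`; being polynomial, the cosine form defines it also where
`sin x = 0`. -/
noncomputable def fejerKernel (N : ℕ) (x : ℝ) : ℝ :=
  N + 2 * ∑ h ∈ Finset.Ico 1 N, (N - h) * cos (2 * h * x)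

lemma continuous_conjDirichletKernel (N : ℕ) : Continuous (conjDirichletKernel N) := by
  unfold conjDirichletKernel
  fun_prop

lemma continuous_fejerKernel (N : ℕ) : Continuous (fejerKernel N) := by
  unfold fejerKernel
  fun_prop

lemma conjDirichletKernel_periodic (N : ℕ) : Function.Periodic (conjDirichletKernel N) π := by
  intro x
  refine Finset.sum_congr rfl fun h _ ↦ ?_
  rw [mul_add, mul_right_comm 2 (h : ℝ) π, mul_comm (2 * π), sin_add_nat_mul_two_pi]

lemma fejerKernel_periodic (N : ℕ) : Function.Periodic (fejerKernel N) π := by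
  intro x
  unfold fejerKernel
  congr 2
  refine Finset.sum_congr rfl fun h _ ↦ ?_
  rw [mul_add, mul_right_comm 2 (h : ℝ) π, mul_comm (2 * π), cos_add_nat_mul_two_pi]

lemma two_mul_sin_mul_conjDirichletKernel (N : ℕ) (x : ℝ) :
    2 * sin x * conjDirichletKernel N x = cos x - cos ((2 * N - 1) * x) := by
  rcases N.eq_zero_or_pos with rfl | hN
  · simp [conjDirichletKernel]
  have h := two_mul_sin_mul_sum_sin N 0 x
  rw [Finset.range_eq_Ico, Finset.sum_eq_sum_Ico_succ_bot hN] at h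
  simpa [conjDirichletKernel] using h

lemma sin_natCast_mul_sq_mul_cot {x : ℝ} (hx : sin x ≠ 0) (N : ℕ) :
    sin (N * x) ^ 2 * cot x = conjDirichletKernel N x + sin (N * x) * cos (N * x) := by
  have hD := two_mul_sin_mul_conjDirichletKernel N x
  have harg : (2 * N - 1) * x = 2 * (N * x) - x := by ring
  rw [harg, cos_sub, cos_two_mul', sin_two_mul] at hD
  have hone := sin_sq_add_cos_sq (N * x)
  rw [cot_eq_cos_div_sin]
  field_simp
  linear_combination -hD / 2 + cos x / 2 * hone

lemma fejerKernel_succ (N : ℕ) (x : ℝ) :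
    fejerKernel (N + 1) x
      = fejerKernel N x + (1 + 2 * ∑ h ∈ Finset.Ico 1 (N + 1), cos (2 * h * x)) := by
  rcases N.eq_zero_or_pos with rfl | hN
  · simp [fejerKernel]
  simp only [fejerKernel, Finset.sum_Ico_succ_top (Nat.succ_le_of_lt hN)]
  have hsplit : ∑ h ∈ Finset.Ico 1 N, (((N + 1 : ℕ) : ℝ) - h) * cos (2 * h * x)
      = ∑ h ∈ Finset.Ico 1 N, ((N : ℝ) - h) * cos (2 * h * x)
        + ∑ h ∈ Finset.Ico 1 N, cos (2 * h * x) := by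
    rw [← Finset.sum_add_distrib]
    refine Finset.sum_congr rfl fun h _ ↦ ?_
    push_cast
    ring
  rw [hsplit]
  push_cast
  ring

lemma sin_mul_one_add_two_mul_sum_cos (N : ℕ) (x : ℝ) :
    sin x * (1 + 2 * ∑ h ∈ Finset.Ico 1 (N + 1), cos (2 * h * x)) = sin ((2 * N + 1) * x) := by
  have hsum := two_mul_sin_mul_sum_cos (N + 1) 0 x
  rw [Finset.range_eq_Ico, Finset.sum_eq_sum_Ico_succ_bot N.succ_pos] at hsum
  have harg : 0 + (2 * ((N + 1 : ℕ) : ℝ) - 1) * x = (2 * N + 1) * x := by push_cast; ring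
  simp only [harg, zero_add, zero_sub, sin_neg, CharP.cast_eq_zero, mul_zero, zero_mul,
    cos_zero] at hsum
  linear_combination hsum

lemma sin_add_mul_sin_sub (a b : ℝ) : sin (a + b) * sin (a - b) = sin a ^ 2 - sin b ^ 2 := by
  rw [sin_add, sin_sub]
  linear_combination sin a ^ 2 * sin_sq_add_cos_sq b - sin b ^ 2 * sin_sq_add_cos_sq a

lemma sin_sq_mul_fejerKernel (N : ℕ) (x : ℝ) :
    sin x ^ 2 * fejerKernel N x = sin (N * x) ^ 2 := by
  induction N with
  | zero => simp [fejerKernel]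
  | succ n ih =>
    have hsin := sin_add_mul_sin_sub ((n + 1) * x) (n * x)
    rw [show (n + 1) * x + n * x = (2 * n + 1) * x by ring,
      show (n + 1) * x - n * x = x by ring] at hsin
    rw [fejerKernel_succ, mul_add, ih, pow_two (sin x), mul_assoc,
      sin_mul_one_add_two_mul_sum_cos, Nat.cast_add_one]
    linear_combination hsin

lemma natCast_mul_mul_pi_div {N : ℕ} (hN : 0 < N) (h : ℕ) : N * (h * (π / N)) = (h : ℤ) * π := by
  have : (N : ℝ) ≠ 0 := by positivity
  push_cast
  field_simp

lemma two_mul_mul_add_mul_pi_div (N h k : ℕ) (y : ℝ) :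
    2 * h * (y + k * (π / N)) = 2 * h * y + 2 * k * (h * (π / N)) := by
  ring

lemma sum_conjDirichletKernel_add (N : ℕ) (y : ℝ) :
    ∑ k ∈ Finset.range N, conjDirichletKernel N (y + k * (π / N)) = 0 := by
  simp only [conjDirichletKernel, two_mul_mul_add_mul_pi_div]
  rw [Finset.sum_comm]
  refine Finset.sum_eq_zero fun h hh ↦ ?_
  obtain ⟨h0, hN⟩ := Finset.mem_Ico.1 hh
  exact sum_sin_add_eq_zero (sin_natCast_mul_pi_div_ne_zero h0 hN)
    (natCast_mul_mul_pi_div (h0.trans hN.le) h) _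

lemma sum_fejerKernel_add (N : ℕ) (y : ℝ) :
    ∑ k ∈ Finset.range N, fejerKernel N (y + k * (π / N)) = N ^ 2 := by
  have hcos : ∀ h ∈ Finset.Ico 1 N, ∑ k ∈ Finset.range N,
      (N - h) * cos (2 * h * y + 2 * k * (h * (π / N))) = 0 := by
    intro h hh
    obtain ⟨h0, hN⟩ := Finset.mem_Ico.1 hh
    rw [← Finset.mul_sum, sum_cos_add_eq_zero (sin_natCast_mul_pi_div_ne_zero h0 hN)
      (natCast_mul_mul_pi_div (h0.trans hN.le) h), mul_zero]
  simp only [fejerKernel, two_mul_mul_add_mul_pi_div]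
  rw [Finset.sum_add_distrib, ← Finset.mul_sum, Finset.sum_comm, Finset.sum_eq_zero hcos]
  simp [pow_two]

lemma sum_range_natCast (N : ℕ) : ∑ k ∈ Finset.range N, (k : ℝ) = N * (N - 1) / 2 := by
  induction N with
  | zero => simp
  | succ n ih => rw [Finset.sum_range_succ, ih]; push_cast; ring

lemma sum_mul_fejerKernel_add (N : ℕ) (y : ℝ) :
    ∑ k ∈ Finset.range N, k * fejerKernel N (y + k * (π / N))
      = N ^ 2 * (N - 1) / 2 + N * ∑ h ∈ Finset.Ico 1 N,
          (N - h) * (cot (h * (π / N)) * sin (2 * h * y) - cos (2 * h * y)) := by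
  have hcos : ∀ h ∈ Finset.Ico 1 N, ∑ k ∈ Finset.range N,
      (k : ℝ) * (2 * ((N - h) * cos (2 * h * y + 2 * k * (h * (π / N)))))
        = N * ((N - h) * (cot (h * (π / N)) * sin (2 * h * y) - cos (2 * h * y))) := by
    intro h hh
    obtain ⟨h0, hN⟩ := Finset.mem_Ico.1 hh
    have hsum := sum_mul_cos_add_eq (sin_natCast_mul_pi_div_ne_zero h0 hN)
      (natCast_mul_mul_pi_div (h0.trans hN.le) h) (2 * h * y)
    calc _ = 2 * (N - h) * ∑ k ∈ Finset.range N,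
          (k : ℝ) * cos (2 * h * y + 2 * k * (h * (π / N))) := by
          rw [Finset.mul_sum]
          exact Finset.sum_congr rfl fun k _ ↦ by ring
      _ = _ := by rw [hsum]; ring
  simp only [fejerKernel, two_mul_mul_add_mul_pi_div, mul_add (Nat.cast _ : ℝ) (N : ℝ),
    Finset.mul_sum]
  rw [Finset.sum_add_distrib, Finset.sum_comm, Finset.sum_congr rfl hcos, ← Finset.sum_mul,
    sum_range_natCast]
  ring

lemma cot_periodic : Function.Periodic cot π := by
  simpa only [Function.Periodic, cot_eq_cos_div_sin] using! cos_antiperiodic.div sin_antiperiodic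

lemma sin_natCast_mul_add_sq {N : ℕ} (hN : 0 < N) (k : ℕ) (y : ℝ) :
    sin (N * (y + k * (π / N))) ^ 2 = sin (N * y) ^ 2 := by
  have harg : N * (y + k * (π / N)) = N * y + k * π := by field_simp
  rw [harg, sin_add_nat_mul_pi, mul_pow, ← pow_mul, (even_two.mul_left k).neg_one_pow, one_mul]

lemma sin_natCast_mul_add_mul_cos {N : ℕ} (hN : 0 < N) (k : ℕ) (y : ℝ) :
    sin (N * (y + k * (π / N))) * cos (N * (y + k * (π / N))) = sin (N * y) * cos (N * y) := by
  have harg : N * (y + k * (π / N)) = N * y + k * π := by field_simp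
  rw [harg, sin_add_nat_mul_pi, cos_add_nat_mul_pi, mul_mul_mul_comm, ← pow_add,
    Even.neg_one_pow ⟨k, rfl⟩, one_mul]

section KernelInequality

variable {N : ℕ} {y : ℝ}

lemma sin_add_mul_pi_div_ne_zero (hN : 0 < N) (hNy : sin (N * y) ≠ 0) (k : ℕ) :
    sin (y + k * (π / N)) ≠ 0 := by
  intro hsin
  have hF := sin_sq_mul_fejerKernel N (y + k * (π / N))
  rw [hsin, sin_natCast_mul_add_sq hN, zero_pow two_ne_zero, zero_mul] at hF
  exact hNy (pow_eq_zero_iff two_ne_zero |>.1 hF.symm)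

lemma natCast_mul_cot_le_sum (hN : 0 < N) (hy0 : 0 < y) (hyπ : y < π) (hNy : sin (N * y) ≠ 0) :
    N * cot y ≤ ∑ k ∈ Finset.range N, (cot (y + k * (π / N))
      - (y + k * (π / N) - π) / sin (y + k * (π / N)) ^ 2) := by
  have hN0 : (0 : ℝ) < N := by positivity
  set u : ℕ → ℝ := fun k ↦ y + k * (π / N) with hu
  change _ ≤ ∑ k ∈ Finset.range N, (cot (u k) - (u k - π) / sin (u k) ^ 2)
  have hu_zero : u 0 = y := by simp [hu]
  have hu_last : u N = y + π := by simp only [hu]; field_simp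
  have hu_succ (k : ℕ) : u k - π + π / N = u (k + 1) - π := by simp only [hu]; push_cast; ring
  have hu_mono : Monotone u := fun i j hij ↦ by simp only [hu]; gcongr
  have hu_ne (k : ℕ) : u k - π ≠ 0 := fun h ↦
    sin_add_mul_pi_div_ne_zero hN hNy k ((congrArg sin (sub_eq_zero.1 h)).trans sin_pi)
  have hstep : ∀ k ∈ Finset.range N, (u (k + 1) - π) * cot (u (k + 1)) - (u k - π) * cot (u k)
      ≤ π / N * (cot (u k) - (u k - π) / sin (u k) ^ 2) := by
    intro k hk
    have hlow : y ≤ u k := hu_zero ▸ hu_mono k.zero_le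
    have hhigh : u (k + 1) ≤ y + π := hu_last ▸ hu_mono (Finset.mem_range.1 hk)
    have htangent := add_mul_cot_add_le (x := u k - π) (t := π / N) (by linarith) (by positivity)
      (div_le_self pi_pos.le (by exact_mod_cast hN)) (by rw [hu_succ]; linarith) (hu_ne k)
      (by rw [hu_succ]; exact hu_ne (k + 1))
    rw [hu_succ, cot_periodic.sub_eq, cot_periodic.sub_eq, sin_sub_pi, neg_sq] at htangent
    linarith
  have hsum := Finset.sum_le_sum hstep
  rw [Finset.sum_range_sub fun k ↦ (u k - π) * cot (u k), ← Finset.mul_sum, hu_zero, hu_last,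
    cot_periodic y, add_sub_cancel_right, ← sub_mul, sub_sub_cancel, div_mul_eq_mul_div,
    le_div_iff₀ hN0] at hsum
  refine le_of_mul_le_mul_left ?_ pi_pos
  linarith

lemma natCast_mul_conjDirichletKernel_add_sum_nonpos_of_sin_ne_zero (hN : 0 < N)
    (hy0 : 0 < y) (hyπ : y < π) (hNy : sin (N * y) ≠ 0) :
    N * conjDirichletKernel N y + ∑ k ∈ Finset.range N,
      (y + k * (π / N) - π) * fejerKernel N (y + k * (π / N)) ≤ 0 := by
  set S := sin (N * y)
  set C := cos (N * y)
  have hterm (k : ℕ) : S ^ 2 * (cot (y + k * (π / N))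
        - (y + k * (π / N) - π) / sin (y + k * (π / N)) ^ 2)
      = conjDirichletKernel N (y + k * (π / N)) + S * C
        - (y + k * (π / N) - π) * fejerKernel N (y + k * (π / N)) := by
    have hsin := sin_add_mul_pi_div_ne_zero hN hNy k
    have hcot := sin_natCast_mul_sq_mul_cot hsin N
    have hfejer : fejerKernel N (y + k * (π / N)) = S ^ 2 / sin (y + k * (π / N)) ^ 2 :=
      eq_div_of_mul_eq (pow_ne_zero 2 hsin)
        (by rw [mul_comm, sin_sq_mul_fejerKernel N, sin_natCast_mul_add_sq hN])
    rw [sin_natCast_mul_add_sq hN, sin_natCast_mul_add_mul_cos hN] at hcot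
    rw [mul_sub, hcot, hfejer]
    ring
  have hcot_y : S ^ 2 * cot y = conjDirichletKernel N y + S * C :=
    sin_natCast_mul_sq_mul_cot (by simpa using sin_add_mul_pi_div_ne_zero hN hNy 0) N
  have hle := mul_le_mul_of_nonneg_left (natCast_mul_cot_le_sum hN hy0 hyπ hNy) (sq_nonneg S)
  rw [Finset.mul_sum, Finset.sum_congr rfl fun k _ ↦ hterm k, Finset.sum_sub_distrib,
    Finset.sum_add_distrib, sum_conjDirichletKernel_add, Finset.sum_const, Finset.card_range,
    nsmul_eq_mul, mul_left_comm, hcot_y] at hle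
  linarith

lemma dense_sin_natCast_mul_ne_zero (hN : 0 < N) : Dense {y : ℝ | sin (N * y) ≠ 0} := by
  have hzeros : {y : ℝ | sin (N * y) = 0} ⊆ Set.range fun m : ℤ ↦ m * π / N := by
    intro y hy
    obtain ⟨m, hm⟩ := sin_eq_zero_iff.1 hy
    exact ⟨m, by simp only [hm]; field_simp⟩
  exact ((Set.countable_range _).mono hzeros).dense_compl ℝ

lemma natCast_mul_conjDirichletKernel_add_sum_nonpos (hN : 0 < N) (hy : y ∈ Set.Icc 0 π) :
    N * conjDirichletKernel N y + ∑ k ∈ Finset.range N,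
      (y + k * (π / N) - π) * fejerKernel N (y + k * (π / N)) ≤ 0 := by
  have hD := continuous_conjDirichletKernel N
  have hF := continuous_fejerKernel N
  have hclosed : IsClosed {y : ℝ | N * conjDirichletKernel N y + ∑ k ∈ Finset.range N,
      (y + k * (π / N) - π) * fejerKernel N (y + k * (π / N)) ≤ 0} :=
    isClosed_le (by fun_prop) continuous_const
  have hgeneric : Set.Ioo 0 π ∩ {y | sin (N * y) ≠ 0} ⊆ _ := fun y hy ↦
    natCast_mul_conjDirichletKernel_add_sum_nonpos_of_sin_ne_zero hN hy.1.1 hy.1.2 hy.2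
  have hIoo : Set.Ioo 0 π ⊆ closure _ :=
    (dense_sin_natCast_mul_ne_zero hN).open_subset_closure_inter isOpen_Ioo
  rw [← closure_Ioo pi_pos.ne] at hy
  exact closure_minimal (hIoo.trans (closure_minimal hgeneric hclosed)) hclosed hy

end KernelInequality

/-- Vaaler's trigonometric polynomial of degree `H`, the minorant `Σ_H - Σ*_H` of `-ψ`, with the
coefficients `α_{h,H}` and `β_{h,H}` written out. -/
noncomputable def vaalerMinorant (H : ℕ) (w : ℝ) : ℝ :=
  (∑ h ∈ Finset.Icc 1 H,
      (1 / (π * (h : ℝ))) * vaalerRho ((h : ℝ) / ((H : ℝ) + 1)) * sin (2 * π * (h : ℝ) * w))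
    - (∑ h ∈ Finset.Icc 1 H,
        (1 / ((H : ℝ) + 1)) * (1 - (h : ℝ) / ((H : ℝ) + 1)) * cos (2 * π * (h : ℝ) * w))
    - 1 / (2 * (H : ℝ) + 2)

section Minorant

variable (H : ℕ) (w : ℝ)

lemma vaalerMinorant_eq_add_sum_cot :
    vaalerMinorant H w = conjDirichletKernel (H + 1) (π * w) / (π * (H + 1))
      + (∑ h ∈ Finset.Ico 1 (H + 1), ((H + 1 : ℕ) - h : ℝ) * (cot (h * (π / (H + 1 : ℕ)))
          * sin (2 * h * (π * w)) - cos (2 * h * (π * w)))) / (H + 1) ^ 2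
      - 1 / (2 * (H + 1)) := by
  rw [vaalerMinorant, conjDirichletKernel, Finset.sum_div, Finset.sum_div,
    ← Finset.sum_add_distrib, ← Finset.sum_sub_distrib, Finset.Ico_add_one_right_eq_Icc]
  congr 1
  · refine Finset.sum_congr rfl fun h hh ↦ ?_
    have hh0 : (h : ℝ) ≠ 0 := Nat.cast_ne_zero.2 (Nat.one_le_iff_ne_zero.1 (Finset.mem_Icc.1 hh).1)
    have harg : 2 * π * h * w = 2 * h * (π * w) := by ring
    have hnode : π * (h / (H + 1)) = h * (π / (H + 1 : ℕ)) := by push_cast; ring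
    rw [vaalerRho, mul_assoc π, hnode, ← cot_eq_cos_div_sin, harg]
    push_cast
    field_simp
    ring
  · ring

lemma vaalerMinorant_eq_add_sum_fejerKernel :
    vaalerMinorant H w = conjDirichletKernel (H + 1) (π * w) / (π * (H + 1))
      + (∑ k ∈ Finset.range (H + 1),
          k * fejerKernel (H + 1) (π * w + k * (π / (H + 1 : ℕ)))) / (H + 1) ^ 3 - 1 / 2 := by
  rw [vaalerMinorant_eq_add_sum_cot, sum_mul_fejerKernel_add]
  generalize (∑ h ∈ Finset.Ico 1 (H + 1), _ : ℝ) = S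
  push_cast
  field_simp
  ring

lemma vaalerMinorant_periodic : Function.Periodic (vaalerMinorant H) 1 := by
  intro w
  simp only [vaalerMinorant_eq_add_sum_fejerKernel, mul_add_one, add_right_comm (π * w) π,
    conjDirichletKernel_periodic _ _, fejerKernel_periodic _ _]

variable {w}

lemma vaalerMinorant_le_of_mem_Icc (hw : w ∈ Set.Icc 0 1) :
    vaalerMinorant H w ≤ 1 / 2 - w := by
  have hy : π * w ∈ Set.Icc 0 π :=
    ⟨mul_nonneg pi_pos.le hw.1, mul_le_of_le_one_right pi_pos.le hw.2⟩
  have hkernel := natCast_mul_conjDirichletKernel_add_sum_nonpos H.succ_pos hy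
  have hsum : ∑ k ∈ Finset.range (H + 1), (π * w + k * (π / (H + 1 : ℕ)) - π)
        * fejerKernel (H + 1) (π * w + k * (π / (H + 1 : ℕ)))
      = (π * w - π) * (H + 1 : ℕ) ^ 2 + π / (H + 1 : ℕ) * ∑ k ∈ Finset.range (H + 1),
          k * fejerKernel (H + 1) (π * w + k * (π / (H + 1 : ℕ))) := by
    rw [← sum_fejerKernel_add (H + 1) (π * w), Finset.mul_sum, Finset.mul_sum,
      ← Finset.sum_add_distrib]
    exact Finset.sum_congr rfl fun k _ ↦ by ring
  rw [hsum] at hkernel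
  have heq : vaalerMinorant H w - (1 / 2 - w) = ((H + 1 : ℕ) * conjDirichletKernel (H + 1) (π * w)
      + ((π * w - π) * (H + 1 : ℕ) ^ 2 + π / (H + 1 : ℕ) * ∑ k ∈ Finset.range (H + 1),
          k * fejerKernel (H + 1) (π * w + k * (π / (H + 1 : ℕ))))) / (π * (H + 1) ^ 2) := by
    rw [vaalerMinorant_eq_add_sum_fejerKernel]
    push_cast
    field_simp
    ring
  rw [← sub_nonpos, heq]
  exact div_nonpos_of_nonpos_of_nonneg hkernel (by positivity)

end Minorant

theorem stmt15 (H : ℕ) (hH : 1 ≤ H) (w : ℝ) :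
    (∑ h ∈ Finset.Icc 1 H,
        (1 / (π * (h : ℝ))) * vaalerRho ((h : ℝ) / ((H : ℝ) + 1)) *
          Real.sin (2 * π * (h : ℝ) * w))
      - (∑ h ∈ Finset.Icc 1 H,
          (1 / ((H : ℝ) + 1)) * (1 - (h : ℝ) / ((H : ℝ) + 1)) *
            Real.cos (2 * π * (h : ℝ) * w))
      - 1 / (2 * (H : ℝ) + 2)
    ≤ -(w - ⌊w⌋ - 1 / 2) := by
  change vaalerMinorant H w ≤ _
  calc vaalerMinorant H w = vaalerMinorant H (w - ⌊w⌋) := by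
          simpa only [mul_one] using ((vaalerMinorant_periodic H).sub_int_mul_eq ⌊w⌋).symm
    _ ≤ 1 / 2 - (w - ⌊w⌋) :=
        vaalerMinorant_le_of_mem_Icc H ⟨Int.fract_nonneg w, (Int.fract_lt_one w).le⟩
    _ = _ := by ring
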